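/- arXiv:1902.04782 — 4 statements merged into one kernel-verified Lean document; each statement's English description precedes it below -/
import Mathlib

section
/- Let n, p be integers with 1 ≤ p ≤ n/2, let f : ℕ → ℝ, and let K be the real matrix indexed by the p-element subsets of {1,…,n} with K(S,T) = f(|S ∩ T|). Then K is positive semidefinite and K(S,S) ≤ 1 for all S if and only if there exists β ∈ ℝ^{p+1} such that f(m) = ∑_{t=0}^{p} β_t · C(m, t) for all integers 0 ≤ m ≤ p, (Δ^p β)_j ≥ 0 for every j ∈ {0,…,p}, and ∑_{t=0}^{p} C(p, t)·β_t ≤ 1. -/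
/-!
The function `m ↦ f m` on `{0,…,p}` always has a unique Newton expansion in the binomials `C(m, t)`,
so the content is that `(Δ^p β)_0, …, (Δ^p β)_p` are exactly the eigenvalues of `K`.

For `x` a function on the `p`-sets put `(down x) A = ∑_{S ⊇ A} x S`. Suppose `down x` vanishes on
all sets of size less than `j`, and let `|A| = j`. Writing `C(|S ∩ T|, l)` as the number of
`l`-sets `B ⊆ S ∩ T`, the value at `A` of `down` applied to the kernel `C(|S ∩ T|, l)` acting on `x`
is `∑_B C(n - |A ∪ B|, n - p) (down x) B`. Vandermonde's identity expands the coefficient in the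
binomials `C(|A ∩ B|, t)`, and only `t = j` survives by the vanishing hypothesis. This gives the
factor `Δ^p_{j,l}` (`down_basis`), hence `(down (K x)) A = (Δ^p β)_j (down x) A` (`down_kernel`).

* If `x` is an eigenvector of `K` and `j` is the first level at which `down x` is nonzero, its
  eigenvalue is therefore `(Δ^p β)_j` (`eigenvalue_eq`). So `Δ^p β ≥ 0` makes `K` positive
  semidefinite by the spectral theorem; no description of the eigenspaces is needed.
* Conversely, `x S = ∏_{i < j} (1[i ∈ S] - 1[p + i ∈ S])` is a nonzero function for which `down x`
  vanishes below level `j`, and the inner product with `x` is a signed sum of values of `down` at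
  `j`-sets. Hence `xᵀ K x = (Δ^p β)_j xᵀ x`, which forces `(Δ^p β)_j ≥ 0` (`delta_nonneg`).

The diagonal entries of `K` are all `f p = ∑ t, C(p, t) β_t`.
-/

open scoped Classical

noncomputable section

/-- The matrix `Δ^p` (rows and columns indexed by `0,…,p`):
`Δ^p_{j,ℓ} = C(n−ℓ−j, p−ℓ)·C(p−j, ℓ−j)` if `j ≤ ℓ` and `0` otherwise. -/
def deltaMat (n p : ℕ) : Matrix (Fin (p + 1)) (Fin (p + 1)) ℝ :=
  fun j l =>
    if (j : ℕ) ≤ (l : ℕ) then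
      (Nat.choose (n - (l : ℕ) - (j : ℕ)) (p - (l : ℕ)) : ℝ) *
        (Nat.choose (p - (j : ℕ)) ((l : ℕ) - (j : ℕ)) : ℝ)
    else 0

/-! ### Counting sets between two given sets -/

open Finset in
/-- Passing to complements within `T` turns the sets between `C` and `T` into subsets of `T \ C`.
This form of the count needs no hypothesis `C.card ≤ l`: otherwise both sides vanish. -/
lemma card_between {α : Type*} [DecidableEq α] (C T : Finset α) (hCT : C ⊆ T) (l : ℕ)
    (hl : l ≤ T.card) :
    ((powersetCard l T).filter (fun B => C ⊆ B)).card
      = (T.card - C.card).choose (T.card - l) := by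
  rw [← card_sdiff_of_subset hCT, ← card_powersetCard]
  refine card_bij' (fun B _ => T \ B) (fun B _ => T \ B) ?_ ?_ ?_ ?_
  · intro B hB
    simp only [mem_filter, mem_powersetCard] at hB ⊢
    exact ⟨sdiff_subset_sdiff subset_rfl hB.2, by rw [card_sdiff_of_subset hB.1.1, hB.1.2]⟩
  · intro B hB
    simp only [mem_filter, mem_powersetCard] at hB ⊢
    have hBT : B ⊆ T := hB.1.trans sdiff_subset
    refine ⟨⟨sdiff_subset, by rw [card_sdiff_of_subset hBT, hB.2]; omega⟩, ?_⟩
    intro c hc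
    refine mem_sdiff.2 ⟨hCT hc, fun h => (mem_sdiff.1 (hB.1 h)).2 hc⟩
  · intro B hB
    simp only [mem_filter, mem_powersetCard] at hB
    exact Finset.sdiff_sdiff_eq_self hB.1.1
  · intro B hB
    simp only [mem_powersetCard] at hB
    exact Finset.sdiff_sdiff_eq_self (hB.1.trans sdiff_subset)

/-! ### The inclusion operator -/

/-- The `p`-element subsets of `{0,…,n-1}`. -/
abbrev Layer (n p : ℕ) := {S : Finset (Fin n) // S.card = p}

/-- The inclusion (down) operator: `(down x) A = ∑_{S ⊇ A} x S`, defined for sets `A` of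
every size at once. -/
def down {n p : ℕ} (x : Layer n p → ℝ) (A : Finset (Fin n)) : ℝ :=
  ∑ S : Layer n p, if A ⊆ S.1 then x S else 0

open Finset in
lemma choose_inter {n : ℕ} (S T : Finset (Fin n)) (l : ℕ) :
    (((S ∩ T).card.choose l : ℕ) : ℝ)
      = ∑ B ∈ powersetCard l univ, (if B ⊆ S then (if B ⊆ T then 1 else 0) else 0 : ℝ) := by
  rw [← card_powersetCard, card_eq_sum_ones, Nat.cast_sum]
  simp only [← ite_and, ← sum_filter, Nat.cast_one]
  congr 1
  ext B
  simp [mem_powersetCard, subset_inter_iff, and_comm]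

open Finset in
lemma card_layer_above {n p : ℕ} (hp : p ≤ n) (D : Finset (Fin n)) :
    (∑ S : Layer n p, if D ⊆ S.1 then (1 : ℝ) else 0) = ((n - D.card).choose (n - p) : ℕ) := by
  have h := card_between D univ (subset_univ _) p (by simpa using hp)
  rw [card_univ, Fintype.card_fin] at h
  rw [← h, card_filter, Nat.cast_sum, ← sum_subtype (powersetCard p univ)
    (p := fun S : Finset (Fin n) => S.card = p) (by simp [mem_powersetCard])
    (fun S => if D ⊆ S then (1 : ℝ) else 0)]
  simp

open Finset in
/-- Going down from the layer `p` to `l` and then to `C` multiplies by the number of `l`-sets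
between `C` and a `p`-set. -/
lemma sum_down_above {n p : ℕ} (x : Layer n p → ℝ) (C : Finset (Fin n)) (l : ℕ) (hl : l ≤ p) :
    (∑ B ∈ powersetCard l univ, if C ⊆ B then down x B else 0)
      = ((p - C.card).choose (p - l) : ℕ) * down x C := by
  have h1 : ∀ B : Finset (Fin n), (if C ⊆ B then down x B else 0)
      = ∑ T : Layer n p, if C ⊆ B then (if B ⊆ T.1 then x T else 0) else 0 := by
    intro B
    split_ifs <;> simp [down]
  simp only [h1]
  rw [sum_comm, down, mul_sum]
  refine sum_congr rfl fun T _ => ?_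
  by_cases hC : C ⊆ T.1
  · have h2 := card_between C T.1 hC l (by rw [T.2]; exact hl)
    rw [T.2] at h2
    simp only [← ite_and, ← sum_filter]
    rw [sum_const, if_pos hC, ← h2, nsmul_eq_mul]
    congr 3
    ext B
    simp only [mem_filter, mem_powersetCard, subset_univ, true_and]
    tauto
  · rw [if_neg hC, mul_zero]
    refine sum_eq_zero fun B _ => ?_
    by_cases h : C ⊆ B
    · rw [if_pos h, if_neg fun h' => hC (h.trans h')]
    · rw [if_neg h]

open Finset in
lemma sum_choose_down {n p : ℕ} (x : Layer n p → ℝ) (A : Finset (Fin n)) (l t : ℕ) (hl : l ≤ p) :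
    (∑ B ∈ powersetCard l univ, ((A ∩ B).card.choose t : ℕ) * down x B)
      = ((p - t).choose (p - l) : ℕ) * ∑ C ∈ powersetCard t A, down x C := by
  have h1 : ∀ B : Finset (Fin n), (((A ∩ B).card.choose t : ℕ) : ℝ) * down x B
      = ∑ C ∈ powersetCard t A, if C ⊆ B then down x B else 0 := by
    intro B
    rw [← sum_filter, sum_const, nsmul_eq_mul, ← card_powersetCard]
    congr 3
    ext C
    simp only [mem_filter, mem_powersetCard, subset_inter_iff]
    tauto
  simp only [h1]
  rw [sum_comm, mul_sum]
  refine sum_congr rfl fun C hC => ?_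
  rw [sum_down_above x C l hl, (mem_powersetCard.1 hC).2]

/-! ### The inclusion operator intertwines the kernel with `Δ^p β` -/

/-- With the complementary binomials the case distinction in `deltaMat` disappears. -/
lemma deltaMat_eq {n p : ℕ} (hpn : 2 * p ≤ n) (j l : Fin (p + 1)) :
    deltaMat n p j l = ((n - j - l : ℕ).choose (n - p - j) : ℕ)
      * ((p - j : ℕ).choose (p - l) : ℕ) := by
  have hj := j.2
  have hl := l.2
  unfold deltaMat
  split_ifs with h
  · congr 2
    · rw [Nat.sub_right_comm]
      exact Nat.choose_symm_of_eq_add (by omega)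
    · exact Nat.choose_symm_of_eq_add (by omega)
  · rw [Nat.choose_eq_zero_of_lt (n := (p - j : ℕ)) (by omega)]
    simp

open Finset in
/-- If `x` is annihilated by all inclusion operators below level `j`, then the inclusion operator
to level `j` intertwines `(C(|S ∩ T|, l))_{S,T}` with the scalar `Δ^p_{j,l}`. -/
lemma down_basis {n p : ℕ} (hpn : 2 * p ≤ n) (x : Layer n p → ℝ) (j l : Fin (p + 1))
    (hx : ∀ C : Finset (Fin n), C.card < j → down x C = 0)
    (A : Finset (Fin n)) (hA : A.card = j) :
    down (fun S : Layer n p => ∑ T : Layer n p, ((S.1 ∩ T.1).card.choose l : ℕ) * x T) A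
      = deltaMat n p j l * down x A := by
  have hj := j.2
  have hl := l.2
  have h1 : down (fun S : Layer n p => ∑ T : Layer n p, ((S.1 ∩ T.1).card.choose l : ℕ) * x T) A
      = ∑ B ∈ powersetCard (l : ℕ) univ, ((n - (A ∪ B).card).choose (n - p) : ℕ) * down x B := by
    have h2 : ∀ S : Layer n p,
        (if A ⊆ S.1 then ∑ T : Layer n p, (((S.1 ∩ T.1).card.choose l : ℕ) : ℝ) * x T else 0)
        = ∑ B ∈ powersetCard (l : ℕ) univ, (if A ∪ B ⊆ S.1 then (1 : ℝ) else 0) * down x B := by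
      intro S
      by_cases hS : A ⊆ S.1
      · simp only [hS, if_true, choose_inter, sum_mul, union_subset_iff, true_and]
        rw [sum_comm]
        refine sum_congr rfl fun B _ => ?_
        by_cases hB : B ⊆ S.1 <;> simp [hB, down]
      · simp [hS, union_subset_iff]
    rw [down]
    simp only [h2]
    rw [sum_comm]
    refine sum_congr rfl fun B _ => ?_
    rw [← sum_mul, card_layer_above (by omega)]
  -- Vandermonde expands the coefficient in the binomials `C(|A ∩ B|, t)`.
  have h3 : ∀ B ∈ powersetCard (l : ℕ) (univ : Finset (Fin n)),
      (((n - (A ∪ B).card).choose (n - p) : ℕ) : ℝ) * down x B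
      = ∑ ts ∈ antidiagonal (n - p), ((n - j - l : ℕ).choose ts.2 : ℕ)
          * (((A ∩ B).card.choose ts.1 : ℕ) * down x B) := by
    intro B hB
    have hB' := (mem_powersetCard.1 hB).2
    have hU := card_union_add_card_inter A B
    have hi := card_le_card (inter_subset_left : A ∩ B ⊆ A)
    have h4 : n - (A ∪ B).card = (A ∩ B).card + (n - j - l) := by omega
    rw [h4, Nat.add_choose_eq, Nat.cast_sum, sum_mul]
    refine sum_congr rfl fun ts _ => ?_
    push_cast
    ring
  rw [h1, sum_congr rfl h3, sum_comm]
  simp only [← mul_sum, sum_choose_down x A l _ (Nat.lt_succ_iff.1 hl)]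
  rw [sum_eq_single ((j : ℕ), n - p - j)]
  · rw [deltaMat_eq hpn]
    simp only [← hA, powersetCard_self, sum_singleton]
    ring
  · rintro ⟨t, s⟩ hts hne
    rw [HasAntidiagonal.mem_antidiagonal] at hts
    simp only at hts ⊢
    rcases lt_trichotomy t (j : ℕ) with h | h | h
    · rw [sum_eq_zero fun C hC => hx C (by rw [(mem_powersetCard.1 hC).2]; exact h)]
      simp
    · exact absurd (Prod.ext h (by simp only; omega)) hne
    · rw [powersetCard_eq_empty.2 (by omega)]
      simp
  · intro h
    refine absurd (HasAntidiagonal.mem_antidiagonal.2 ?_) h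
    simp only
    omega

open Finset Matrix in
lemma down_kernel {n p : ℕ} (hpn : 2 * p ≤ n) (f : ℕ → ℝ) (K : Matrix (Layer n p) (Layer n p) ℝ)
    (hK : ∀ S T, K S T = f (S.1 ∩ T.1).card) (β : Fin (p + 1) → ℝ)
    (hβ : ∀ m : ℕ, m ≤ p → f m = ∑ t : Fin (p + 1), β t * (Nat.choose m (t : ℕ) : ℝ))
    (x : Layer n p → ℝ) (j : Fin (p + 1))
    (hx : ∀ C : Finset (Fin n), C.card < j → down x C = 0)
    (A : Finset (Fin n)) (hA : A.card = j) :
    down (K *ᵥ x) A = (deltaMat n p *ᵥ β) j * down x A := by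
  have h1 : K *ᵥ x = fun S => ∑ l : Fin (p + 1),
      β l * ∑ T : Layer n p, ((S.1 ∩ T.1).card.choose l : ℕ) * x T := by
    ext S
    have h2 : ∀ T : Layer n p, K S T * x T
        = ∑ l : Fin (p + 1), β l * (((S.1 ∩ T.1).card.choose l : ℕ) * x T) := by
      intro T
      rw [hK, hβ _ ((card_le_card inter_subset_left).trans S.2.le), sum_mul]
      exact sum_congr rfl fun l _ => mul_assoc _ _ _
    simp only [mulVec, dotProduct, h2, mul_sum]
    exact sum_comm
  have h3 : down (K *ᵥ x) A = ∑ l : Fin (p + 1), β l * down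
      (fun S : Layer n p => ∑ T : Layer n p, ((S.1 ∩ T.1).card.choose l : ℕ) * x T) A := by
    rw [h1]
    simp only [down, ← sum_filter]
    rw [sum_comm]
    simp only [mul_sum]
  rw [h3]
  simp only [down_basis hpn x j _ hx A hA, mulVec, dotProduct, sum_mul]
  exact sum_congr rfl fun l _ => by ring

lemma down_self {n p : ℕ} (x : Layer n p → ℝ) (S : Layer n p) : down x S.1 = x S := by
  rw [down, Finset.sum_eq_single S]
  · simp
  · intro T _ hT
    refine if_neg fun h => hT (Subtype.ext ?_)
    exact (Finset.eq_of_subset_of_card_le h (by rw [S.2, T.2])).symm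
  · simp

/-! ### Eigenvalues of the kernel -/

open Matrix in
/-- Every eigenvalue of the kernel is one of the numbers `(Δ^p β)_j`: take `j` to be the first level
at which the inclusion operator does not kill the eigenvector. -/
lemma eigenvalue_eq {n p : ℕ} (hpn : 2 * p ≤ n) (f : ℕ → ℝ) (K : Matrix (Layer n p) (Layer n p) ℝ)
    (hK : ∀ S T, K S T = f (S.1 ∩ T.1).card) (β : Fin (p + 1) → ℝ)
    (hβ : ∀ m : ℕ, m ≤ p → f m = ∑ t : Fin (p + 1), β t * (Nat.choose m (t : ℕ) : ℝ))
    (x : Layer n p → ℝ) (hx : x ≠ 0) (μ : ℝ) (hμ : K *ᵥ x = μ • x) :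
    ∃ j, μ = (deltaMat n p *ᵥ β) j := by
  obtain ⟨S, hS⟩ := Function.ne_iff.1 hx
  have hex : ∃ j, ∃ A : Finset (Fin n), A.card = j ∧ down x A ≠ 0 :=
    ⟨p, S.1, S.2, by rwa [down_self]⟩
  have hmin : Nat.find hex ≤ p := Nat.find_min' hex ⟨S.1, S.2, by rwa [down_self]⟩
  obtain ⟨A, hA, hA0⟩ := Nat.find_spec hex
  refine ⟨⟨Nat.find hex, Nat.lt_succ_of_le hmin⟩, ?_⟩
  have h := down_kernel hpn f K hK β hβ x ⟨Nat.find hex, Nat.lt_succ_of_le hmin⟩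
    (fun C hC => by_contra fun h => Nat.find_min hex hC ⟨C, rfl, h⟩) A hA
  rw [hμ] at h
  have h2 : down (μ • x) A = μ * down x A := by
    simp [down, Finset.mul_sum]
  rw [h2] at h
  exact mul_right_cancel₀ hA0 h

/-! ### Test functions vanishing below a given level -/

/-- The first element of the `i`-th of the disjoint pairs `{i, p + i}`, `i < p`, in
`{0,…,n-1}`. -/
def pairL {n p : ℕ} (hpn : 2 * p ≤ n) (i : Fin p) : Fin n := ⟨i, by omega⟩

/-- The second element of the `i`-th of the disjoint pairs `{i, p + i}`, `i < p`, in
`{0,…,n-1}`. -/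
def pairR {n p : ℕ} (hpn : 2 * p ≤ n) (i : Fin p) : Fin n := ⟨p + i, by omega⟩

/-- The polytabloid-type function `S ↦ ∏_{i ∈ J} (1[i ∈ S] - 1[p + i ∈ S])`. -/
def tab {n p : ℕ} (hpn : 2 * p ≤ n) (J : Finset (Fin p)) (S : Layer n p) : ℝ :=
  ∏ i ∈ J, ((if pairL hpn i ∈ S.1 then 1 else 0) - (if pairR hpn i ∈ S.1 then 1 else 0))

section pairs
variable {n p : ℕ} (hpn : 2 * p ≤ n)

lemma pairL_inj {i k : Fin p} : pairL hpn i = pairL hpn k ↔ i = k := by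
  simp [pairL, Fin.ext_iff]

lemma pairR_inj {i k : Fin p} : pairR hpn i = pairR hpn k ↔ i = k := by
  simp [pairR, Fin.ext_iff]

lemma pairL_ne_pairR (i k : Fin p) : pairL hpn i ≠ pairR hpn k := by
  simp only [pairL, pairR, ne_eq, Fin.ext_iff]
  omega

open Finset in
lemma exists_pair_disjoint (J : Finset (Fin p)) (A : Finset (Fin n)) (hA : A.card < J.card) :
    ∃ i ∈ J, pairL hpn i ∉ A ∧ pairR hpn i ∉ A := by
  by_contra! h
  refine absurd hA (not_lt.2 (card_le_card_of_injOn
    (fun i => if pairL hpn i ∈ A then pairL hpn i else pairR hpn i) ?_ ?_))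
  · intro i hi
    by_cases h' : pairL hpn i ∈ A
    · simp [h']
    · simpa [h'] using h i hi h'
  · intro i _ k _ hik
    simp only at hik
    split_ifs at hik
    · exact (pairL_inj hpn).1 hik
    · exact absurd hik (pairL_ne_pairR hpn _ _)
    · exact absurd hik.symm (pairL_ne_pairR hpn _ _)
    · exact (pairR_inj hpn).1 hik

/-- The action of a permutation of the ground set on the `p`-subsets. -/
def permLayer (σ : Equiv.Perm (Fin n)) : Layer n p ≃ Layer n p where
  toFun S := ⟨S.1.map σ.toEmbedding, by rw [Finset.card_map, S.2]⟩
  invFun S := ⟨S.1.map σ.symm.toEmbedding, by rw [Finset.card_map, S.2]⟩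
  left_inv S := by ext; simp [Finset.mem_map_equiv]
  right_inv S := by ext; simp [Finset.mem_map_equiv]

/-- A set `A` with fewer than `J.card` elements misses one of the pairs, and swapping that pair
negates `tab` while preserving the condition `A ⊆ S`. -/
lemma down_tab (J : Finset (Fin p)) (A : Finset (Fin n)) (hA : A.card < J.card) :
    down (tab hpn J) A = 0 := by
  obtain ⟨i, hi, ha, hb⟩ := exists_pair_disjoint hpn J A hA
  set σ : Equiv.Perm (Fin n) := Equiv.swap (pairL hpn i) (pairR hpn i) with hσ
  have hmem : ∀ (S : Layer n p) (y : Fin n), y ∈ (permLayer σ S).1 ↔ σ y ∈ S.1 := by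
    intro S y
    simp [permLayer, Finset.mem_map_equiv, hσ]
  have hneg : ∀ S : Layer n p, tab hpn J (permLayer σ S) = - tab hpn J S := by
    intro S
    unfold tab
    rw [← Finset.mul_prod_erase _ _ hi, ← Finset.mul_prod_erase J _ hi, ← neg_mul, neg_sub]
    congr 1
    · have e1 : σ (pairL hpn i) = pairR hpn i := Equiv.swap_apply_left _ _
      have e2 : σ (pairR hpn i) = pairL hpn i := Equiv.swap_apply_right _ _
      simp only [hmem, e1, e2]
    · refine Finset.prod_congr rfl fun k hk => ?_
      have hki := Finset.ne_of_mem_erase hk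
      have e1 : σ (pairL hpn k) = pairL hpn k := Equiv.swap_apply_of_ne_of_ne
        (fun h => hki ((pairL_inj hpn).1 h)) (pairL_ne_pairR hpn _ _)
      have e2 : σ (pairR hpn k) = pairR hpn k := Equiv.swap_apply_of_ne_of_ne
        (pairL_ne_pairR hpn _ _).symm (fun h => hki ((pairR_inj hpn).1 h))
      simp only [hmem, e1, e2]
  have hsub : ∀ S : Layer n p, A ⊆ (permLayer σ S).1 ↔ A ⊆ S.1 := by
    intro S
    have hfix : ∀ y ∈ A, σ y = y := fun y hy => Equiv.swap_apply_of_ne_of_ne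
      (fun h => ha (h ▸ hy)) (fun h => hb (h ▸ hy))
    refine forall₂_congr fun y hy => ?_
    rw [hmem, hfix y hy]
  have h : down (tab hpn J) A = - down (tab hpn J) A := by
    conv_lhs => rw [down, ← Equiv.sum_comp (permLayer σ)]
    rw [down, ← Finset.sum_neg_distrib]
    refine Finset.sum_congr rfl fun S _ => ?_
    simp only [hsub, hneg]
    split_ifs <;> simp
  linarith

open Finset in
/-- Expanding the product shows that `tab` is in the image of the transpose of the inclusion
operator from level `J.card`. -/
lemma tab_dotProduct (J : Finset (Fin p)) (z : Layer n p → ℝ) :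
    ∑ S, tab hpn J S * z S = ∑ P ∈ J.powerset, (-1 : ℝ) ^ (J \ P).card
      * down z (P.image (pairL hpn) ∪ (J \ P).image (pairR hpn)) := by
  have h1 : ∀ S : Layer n p, tab hpn J S * z S = ∑ P ∈ J.powerset, (-1 : ℝ) ^ (J \ P).card
      * if P.image (pairL hpn) ∪ (J \ P).image (pairR hpn) ⊆ S.1 then z S else 0 := by
    intro S
    unfold tab
    simp only [sub_eq_add_neg]
    rw [prod_add, sum_mul]
    refine sum_congr rfl fun P _ => ?_
    rw [prod_neg, prod_boole, prod_boole]
    simp only [union_subset_iff, image_subset_iff, ite_and]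
    split_ifs <;> ring
  simp only [h1, down, mul_sum]
  exact sum_comm

open Finset in
lemma card_transversal (J P : Finset (Fin p)) (hP : P ⊆ J) :
    (P.image (pairL hpn) ∪ (J \ P).image (pairR hpn)).card = J.card := by
  rw [card_union_of_disjoint, card_image_of_injective _ fun _ _ h => (pairL_inj hpn).1 h,
    card_image_of_injective _ fun _ _ h => (pairR_inj hpn).1 h, card_sdiff_of_subset hP]
  · have := card_le_card hP
    omega
  · rw [disjoint_left]
    intro y h1 h2
    obtain ⟨i, _, rfl⟩ := mem_image.1 h1
    obtain ⟨k, _, h⟩ := mem_image.1 h2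
    exact pairL_ne_pairR hpn _ _ h.symm

open Finset in
lemma exists_tab_eq_one (J : Finset (Fin p)) : ∃ S, tab hpn J S = 1 := by
  refine ⟨⟨univ.image (pairL hpn), by
    rw [card_image_of_injective _ fun _ _ h => (pairL_inj hpn).1 h]; simp⟩, ?_⟩
  refine prod_eq_one fun i _ => ?_
  have h : ∀ k, pairL hpn k ≠ pairR hpn i := fun k => pairL_ne_pairR hpn _ _
  simp [h]

end pairs

open Finset Matrix in
/-- Testing positivity on `tab` with `J.card = j` gives `(Δ^p β)_j ≥ 0`. -/
lemma delta_nonneg {n p : ℕ} (hpn : 2 * p ≤ n) (f : ℕ → ℝ) (K : Matrix (Layer n p) (Layer n p) ℝ)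
    (hK : ∀ S T, K S T = f (S.1 ∩ T.1).card) (β : Fin (p + 1) → ℝ)
    (hβ : ∀ m : ℕ, m ≤ p → f m = ∑ t : Fin (p + 1), β t * (Nat.choose m (t : ℕ) : ℝ))
    (hpsd : K.PosSemidef) (j : Fin (p + 1)) : 0 ≤ (deltaMat n p *ᵥ β) j := by
  obtain ⟨J, -, hJ⟩ := exists_subset_card_eq (s := (univ : Finset (Fin p))) (n := j)
    (by simpa using Nat.lt_succ_iff.1 j.2)
  have hquad : ∑ S, tab hpn J S * (K *ᵥ tab hpn J) S
      = (deltaMat n p *ᵥ β) j * ∑ S, tab hpn J S * tab hpn J S := by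
    rw [tab_dotProduct, tab_dotProduct, mul_sum]
    refine sum_congr rfl fun P hP => ?_
    rw [down_kernel hpn f K hK β hβ _ j (fun C hC => down_tab hpn J C (by omega)) _
      ((card_transversal hpn J P (mem_powerset.1 hP)).trans hJ)]
    ring
  have h0 : 0 ≤ ∑ S, tab hpn J S * (K *ᵥ tab hpn J) S := by
    have := hpsd.dotProduct_mulVec_nonneg (tab hpn J)
    simpa [dotProduct] using this
  have hpos : 0 < ∑ S, tab hpn J S * tab hpn J S := by
    obtain ⟨S, hS⟩ := exists_tab_eq_one hpn J
    exact sum_pos' (fun _ _ => mul_self_nonneg _) ⟨S, mem_univ _, by simp [hS]⟩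
  rw [hquad] at h0
  exact nonneg_of_mul_nonneg_left h0 hpos

/-! ### Newton expansion and conclusion -/

/-- Newton's forward difference formula at `0`. -/
lemma exists_newton (f : ℕ → ℝ) (p : ℕ) : ∃ β : Fin (p + 1) → ℝ,
    ∀ m : ℕ, m ≤ p → f m = ∑ t : Fin (p + 1), β t * (Nat.choose m (t : ℕ) : ℝ) := by
  refine ⟨fun t => (fwdDiff 1)^[t] f 0, fun m hm => ?_⟩
  have h := shift_eq_sum_fwdDiff_iter 1 f m 0
  simp only [zero_add, smul_eq_mul, mul_one, nsmul_eq_mul] at h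
  rw [h, Fin.sum_univ_eq_sum_range (fun t => (fwdDiff 1)^[t] f 0 * (Nat.choose m t : ℝ)) (p + 1)]
  refine (Finset.sum_subset (Finset.range_subset_range.2 (by omega)) fun t _ ht => ?_).trans
    (Finset.sum_congr rfl fun t _ => mul_comm _ _)
  rw [Nat.choose_eq_zero_of_lt (by simpa using ht)]
  simp

/-- Characterization of Euclidean kernels on a hypercube layer: a set-symmetric matrix
`K(S,T) = f(|S ∩ T|)` is PSD with diagonal at most `1` iff `f` is given on `{0,…,p}` by
coefficients `β` in the `P`-basis with `Δ^p β ≥ 0` and `⟨η^p, β⟩ ≤ 1`. -/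
theorem statement4 (n p : ℕ) (hp : 1 ≤ p) (hpn : 2 * p ≤ n) (f : ℕ → ℝ)
    (K : Matrix {S : Finset (Fin n) // S.card = p} {S : Finset (Fin n) // S.card = p} ℝ)
    (hK : ∀ S T, K S T = f (S.1 ∩ T.1).card) :
    (K.PosSemidef ∧ ∀ S, K S S ≤ 1) ↔
      ∃ β : Fin (p + 1) → ℝ,
        (∀ m : ℕ, m ≤ p → f m = ∑ t : Fin (p + 1), β t * (Nat.choose m (t : ℕ) : ℝ)) ∧
        (∀ j, 0 ≤ (deltaMat n p).mulVec β j) ∧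
        ∑ t : Fin (p + 1), (Nat.choose p (t : ℕ) : ℝ) * β t ≤ 1 := by
  have hdiag : ∀ S, K S S = f p := fun S => by rw [hK, Finset.inter_self, S.2]
  constructor
  · rintro ⟨hpsd, hle⟩
    obtain ⟨β, hβ⟩ := exists_newton f p
    refine ⟨β, hβ, delta_nonneg hpn f K hK β hβ hpsd, ?_⟩
    obtain ⟨S, -⟩ := exists_tab_eq_one hpn (∅ : Finset (Fin p))
    have h := hle S
    rw [hdiag, hβ p le_rfl] at h
    exact (Finset.sum_congr rfl fun t _ => mul_comm _ _).trans_le h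
  · rintro ⟨β, hβ, hΔ, hη⟩
    have hH : K.IsHermitian := by
      ext S T
      simp [Matrix.conjTranspose_apply, hK, Finset.inter_comm]
    refine ⟨hH.posSemidef_iff_eigenvalues_nonneg.2 fun i => ?_, fun S => ?_⟩
    · obtain ⟨j, hj⟩ := eigenvalue_eq hpn f K hK β hβ (hH.eigenvectorBasis i).ofLp
        (fun h => hH.eigenvectorBasis.orthonormal.ne_zero i (WithLp.ofLp_injective 2 h))
        (hH.eigenvalues i) (hH.mulVec_eigenvectorBasis i)
      rw [hj]
      exact hΔ j
    · rw [hdiag, hβ p le_rfl]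
      exact (Finset.sum_congr rfl fun t _ => mul_comm _ _).trans_le hη
end
end

section
/- Let n, p be integers with 1 ≤ p ≤ n/2. Then the matrix Δ^p is invertible; for each i ∈ {0,…,p}, writing β̄^{(i)} = (Δ^p)^{-1} e_i (where e_i is the i-th standard basis vector of ℝ^{p+1}), one has ⟨η^p, β̄^{(i)}⟩ > 0; and, setting β^{(i)} = β̄^{(i)} / ⟨η^p, β̄^{(i)}⟩, the matrix K_i indexed by the p-element subsets of {1,…,n} with K_i(S,T) = ∑_{t=0}^{p} β^{(i)}_t · C(|S ∩ T|, t) is positive semidefinite with all diagonal entries at most 1. -/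
/-!
The matrices `[C(|S ∩ T|, t)]` span the Bose–Mesner algebra of the Johnson scheme, and column `t` of
`Δ^p` lists the eigenvalues of the `t`-th one. Hence `K̄ = ∑_t β̄^{(i)}_t C(|S ∩ T|, t)` is the
orthogonal projection onto the `i`-th eigenspace: it is positive semidefinite, nonzero, and has
constant diagonal `⟨η^p, β̄^{(i)}⟩`.

The eigenspaces need not be constructed. Let `x_A` be the indicator of the `p`-sets containing `A`.
A double count and Vandermonde's identity (`sum_superset_choose_inter`) show that `[C(|S ∩ T|, t)]`
sends `x_A` to `Δ_{|A|,t} x_A` plus a combination of `x_R` with `R ⊊ A`. If `v` is an eigenvector of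
the symmetric kernel with coefficients `b`, then pairing it with `x_A`, for `A` of least size such
that `⟨x_A, v⟩ ≠ 0`, shows that the eigenvalue is an entry of `Δ b` (`eigenvalue_kernelOf`). For
`b = β̄^{(i)}` these entries are `0` and `1`, so `K̄` is positive semidefinite. Its diagonal value is
nonnegative; were it `0`, the trace and so `K̄` itself would vanish, forcing `β̄^{(i)} = 0`
(`kernelOf_eq_zero`, as two `p`-sets can meet in any number `k ≤ p` of points), against
`Δ β̄^{(i)} = e_i`. Dividing by the diagonal value makes every diagonal entry equal to `1`.
-/

open scoped Classical

noncomputable section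

/-- The vector `η^p` with `η^p_ℓ = C(p, ℓ)`. -/
def etaVec (p : ℕ) : Fin (p + 1) → ℝ := fun l => (Nat.choose p (l : ℕ) : ℝ)

/-- `β̄^{(i)} = (Δ^p)^{-1} e_i`. -/
def betaBar (n p : ℕ) (i : Fin (p + 1)) : Fin (p + 1) → ℝ :=
  (deltaMat n p)⁻¹.mulVec (Pi.single i 1)

/-- `β^{(i)} = β̄^{(i)} / ⟨η^p, β̄^{(i)}⟩`. -/
def betaVec (n p : ℕ) (i : Fin (p + 1)) : Fin (p + 1) → ℝ :=
  fun t => betaBar n p i t / (∑ l, etaVec p l * betaBar n p i l)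

/-- The `i`-th vertex kernel matrix `K_i(S,T) = ∑_t β^{(i)}_t · C(|S ∩ T|, t)`. -/
def vertexKernel (n p : ℕ) (i : Fin (p + 1)) :
    Matrix {S : Finset (Fin n) // S.card = p} {S : Finset (Fin n) // S.card = p} ℝ :=
  fun S T => ∑ t : Fin (p + 1), betaVec n p i t * (Nat.choose (S.1 ∩ T.1).card (t : ℕ) : ℝ)

/-- Supersets of `D` of size `p` correspond to `(n - p)`-subsets of the complement of `D`. The form
`C(n - |D|, n - p)` stays correct (it is `0`) when `|D| > p`. -/
lemma sum_superset_indicator (n p : ℕ) (hpn : p ≤ n) (D : Finset (Fin n)) :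
    (∑ S ∈ Finset.powersetCard p Finset.univ, if D ⊆ S then 1 else 0)
      = (n - D.card).choose (n - p) := by
  rw [← Finset.sum_filter, Finset.sum_const, smul_eq_mul, mul_one]
  have h : (n - D.card).choose (n - p) = (Finset.powersetCard (n - p) Dᶜ).card := by
    rw [Finset.card_powersetCard, Finset.card_compl, Fintype.card_fin]
  rw [h]
  refine Finset.card_nbij' (fun S => Sᶜ) (fun S => Sᶜ) ?_ ?_ ?_ ?_
  · intro S hS
    simp only [Finset.coe_filter, Finset.mem_powersetCard, Set.mem_ofPred_eq] at hS
    simp only [Finset.mem_coe, Finset.mem_powersetCard, Finset.compl_subset_compl,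
      Finset.card_compl, Fintype.card_fin]
    exact ⟨hS.2, by rw [hS.1.2]⟩
  · intro S hS
    simp only [Finset.mem_coe, Finset.mem_powersetCard] at hS
    simp only [Finset.coe_filter, Finset.mem_powersetCard, Set.mem_ofPred_eq, Finset.card_compl,
      Fintype.card_fin, hS.2]
    refine ⟨⟨Finset.subset_univ _, by omega⟩, ?_⟩
    rw [← Finset.compl_subset_compl, compl_compl]
    exact hS.1
  · intro S _
    exact compl_compl S
  · intro S _
    exact compl_compl S

lemma sum_between_indicator {n : ℕ} (t : ℕ) (R T : Finset (Fin n)) :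
    (∑ B ∈ Finset.powersetCard t T, if R ⊆ B then 1 else 0)
      = if R ⊆ T ∧ R.card ≤ t then (T.card - R.card).choose (t - R.card) else 0 := by
  rw [← Finset.sum_filter, Finset.sum_const, smul_eq_mul, mul_one]
  split_ifs with h
  · have h' : (T.card - R.card).choose (t - R.card)
        = (Finset.powersetCard (t - R.card) (T \ R)).card := by
      rw [Finset.card_powersetCard, Finset.card_sdiff_of_subset h.1]
    rw [h']
    refine Finset.card_nbij' (fun B => B \ R) (fun B => B ∪ R) ?_ ?_ ?_ ?_
    · intro B hB
      simp only [Finset.coe_filter, Finset.mem_powersetCard, Set.mem_ofPred_eq] at hB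
      simp only [Finset.mem_coe, Finset.mem_powersetCard]
      refine ⟨Finset.sdiff_subset_sdiff hB.1.1 le_rfl, ?_⟩
      rw [Finset.card_sdiff_of_subset hB.2, hB.1.2]
    · intro B hB
      simp only [Finset.mem_coe, Finset.mem_powersetCard] at hB
      simp only [Finset.coe_filter, Finset.mem_powersetCard, Set.mem_ofPred_eq]
      have hd : Disjoint B R := Finset.disjoint_of_subset_left hB.1 Finset.sdiff_disjoint
      refine ⟨⟨Finset.union_subset (hB.1.trans Finset.sdiff_subset) h.1, ?_⟩,
        Finset.subset_union_right⟩
      rw [Finset.card_union_of_disjoint hd, hB.2]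
      omega
    · intro B hB
      simp only [Finset.coe_filter, Finset.mem_powersetCard, Set.mem_ofPred_eq] at hB
      exact Finset.sdiff_union_of_subset hB.2
    · intro B hB
      simp only [Finset.mem_coe, Finset.mem_powersetCard] at hB
      have hd : Disjoint B R := Finset.disjoint_of_subset_left hB.1 Finset.sdiff_disjoint
      exact Finset.union_sdiff_cancel_right hd
  · rw [Finset.card_eq_zero, Finset.filter_eq_empty_iff]
    intro B hB hR
    rw [Finset.mem_powersetCard] at hB
    exact h ⟨hR.trans hB.1, hB.2 ▸ Finset.card_le_card hR⟩

/-- Vandermonde's identity, with the first family of subsets made explicit. -/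
lemma choose_add_card_eq_sum {n : ℕ} (I : Finset (Fin n)) (N k : ℕ) (hI : I.card ≤ k) :
    (I.card + N).choose k = ∑ R ∈ I.powerset, N.choose (k - R.card) := by
  rw [Finset.sum_powerset_apply_card (fun r => N.choose (k - r)), Nat.add_choose_eq,
    Finset.Nat.sum_antidiagonal_eq_sum_range_succ
      (fun a b => I.card.choose a * N.choose b) k]
  symm
  simp only [smul_eq_mul]
  apply Finset.sum_subset
  · intro x
    simp only [Finset.mem_range]
    omega
  · intro x _ hx
    rw [Finset.mem_range] at hx
    rw [Nat.choose_eq_zero_of_lt (by omega), zero_mul]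

/-- The action of `[C(|S ∩ T|, t)]` on the indicator `S ↦ [A ⊆ S]`: the result is a combination of
the indicators `T ↦ [R ⊆ T]` with `R ⊆ A`, and the coefficient of `R = A` is `Δ_{|A|,t}`. -/
lemma sum_superset_choose_inter (n p t : ℕ) (hpn : 2 * p ≤ n) (ht : t ≤ p)
    (A T : Finset (Fin n)) (hA : A.card ≤ p) (hT : T.card = p) :
    (∑ S ∈ Finset.powersetCard p Finset.univ, if A ⊆ S then (S ∩ T).card.choose t else 0)
      = ∑ R ∈ A.powerset, if R ⊆ T then
          (if R.card ≤ t then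
            (n - A.card - t).choose (n - p - R.card) * (p - R.card).choose (t - R.card)
          else 0) else 0 := by
  have h1 : ∀ S : Finset (Fin n), (if A ⊆ S then (S ∩ T).card.choose t else 0)
      = ∑ B ∈ Finset.powersetCard t T, if A ∪ B ⊆ S then 1 else 0 := by
    intro S
    by_cases hS : A ⊆ S
    · simp only [hS, if_true, Finset.union_subset_iff, true_and]
      rw [← Finset.card_powersetCard, ← Finset.sum_filter, Finset.sum_const, smul_eq_mul, mul_one]
      congr 1
      ext B
      simp only [Finset.mem_powersetCard, Finset.mem_filter, Finset.subset_inter_iff]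
      tauto
    · simp [hS, Finset.union_subset_iff]
  have h2 : ∀ B ∈ Finset.powersetCard t T, (n - (A ∪ B).card).choose (n - p)
      = ∑ R ∈ A.powerset, if R ⊆ B then (n - A.card - t).choose (n - p - R.card) else 0 := by
    intro B hB
    rw [Finset.mem_powersetCard] at hB
    have hc := Finset.card_union_add_card_inter A B
    have hI : (A ∩ B).card ≤ A.card := Finset.card_le_card Finset.inter_subset_left
    have e : n - (A ∪ B).card = (A ∩ B).card + (n - A.card - t) := by omega
    rw [e, choose_add_card_eq_sum _ _ _ (by omega), ← Finset.sum_filter]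
    congr 1
    ext R
    simp only [Finset.mem_powerset, Finset.mem_filter, Finset.subset_inter_iff]
  simp only [h1]
  rw [Finset.sum_comm]
  simp only [sum_superset_indicator n p (by omega)]
  rw [Finset.sum_congr rfl h2, Finset.sum_comm]
  refine Finset.sum_congr rfl fun R _ => ?_
  have h3 := sum_between_indicator t R T
  calc _ = (n - A.card - t).choose (n - p - R.card) *
        ∑ B ∈ Finset.powersetCard t T, (if R ⊆ B then 1 else 0) := by
          rw [Finset.mul_sum]
          refine Finset.sum_congr rfl fun B _ => ?_
          split_ifs <;> simp
    _ = _ := by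
          rw [h3, hT]
          by_cases a : R ⊆ T <;> by_cases b : R.card ≤ t <;> simp [a, b]

/-- The kernel `∑_t b_t C(|S ∩ T|, t)` for an arbitrary coefficient vector `b`. -/
def kernelOf (n p : ℕ) (b : Fin (p + 1) → ℝ) :
    Matrix {S : Finset (Fin n) // S.card = p} {S : Finset (Fin n) // S.card = p} ℝ :=
  fun S T => ∑ t : Fin (p + 1), b t * (Nat.choose (S.1 ∩ T.1).card (t : ℕ) : ℝ)

lemma sum_subtype_superset_choose_inter (n p t : ℕ) (hpn : 2 * p ≤ n) (ht : t ≤ p)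
    (A T : Finset (Fin n)) (hA : A.card ≤ p) (hT : T.card = p) :
    (∑ S : {S : Finset (Fin n) // S.card = p},
      if A ⊆ S.1 then ((S.1 ∩ T).card.choose t : ℝ) else 0)
      = ∑ R ∈ A.powerset, if R ⊆ T then
          (if R.card ≤ t then
            ((n - A.card - t).choose (n - p - R.card) : ℝ) * (p - R.card).choose (t - R.card)
          else 0) else 0 := by
  have h := sum_superset_choose_inter n p t hpn ht A T hA hT
  rw [Finset.sum_subtype (p := fun S : Finset (Fin n) => S.card = p) _
    (by intro S; simp [Finset.mem_powersetCard])] at h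
  exact_mod_cast h

lemma kernelOf_isHermitian (n p : ℕ) (b : Fin (p + 1) → ℝ) : (kernelOf n p b).IsHermitian := by
  ext S T
  simp [kernelOf, Finset.inter_comm]

/-- Every eigenvalue of the kernel is an entry of `Δ b`. The index is the least size `j` of a set
`A` for which the eigenvector is not orthogonal to the indicator of the supersets of `A`. -/
lemma eigenvalue_kernelOf (n p : ℕ) (hpn : 2 * p ≤ n) (b : Fin (p + 1) → ℝ)
    (v : {S : Finset (Fin n) // S.card = p} → ℝ) (hv : v ≠ 0) (l : ℝ)
    (hl : (kernelOf n p b).mulVec v = l • v) :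
    ∃ j, l = (deltaMat n p).mulVec b j := by
  set F : Finset (Fin n) → ℝ := fun A =>
    ∑ T : {S : Finset (Fin n) // S.card = p}, if A ⊆ T.1 then v T else 0 with hF
  have hex : ∃ j, ∃ A : Finset (Fin n), A.card = j ∧ F A ≠ 0 ∧ j ≤ p := by
    obtain ⟨S, hS⟩ := Function.ne_iff.mp hv
    refine ⟨p, S.1, S.2, ?_, le_rfl⟩
    have : F S.1 = v S := by
      rw [hF]
      simp only
      rw [Finset.sum_eq_single S]
      · simp
      · intro T _ hT
        rw [if_neg]
        intro hs
        exact hT (Subtype.ext (Finset.eq_of_subset_of_card_le hs (by rw [T.2, S.2])).symm)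
      · simp
    rw [this]
    exact hS
  obtain ⟨A, hAj, hFA, hjp⟩ := Nat.find_spec hex
  set j := Nat.find hex
  have hmin : ∀ R : Finset (Fin n), R ⊂ A → F R = 0 := by
    intro R hR
    by_contra hne
    have hlt := Finset.card_lt_card hR
    exact Nat.find_min hex (m := R.card) (by omega) ⟨R, rfl, hne, by omega⟩
  refine ⟨⟨j, by omega⟩, ?_⟩
  apply mul_right_cancel₀ hFA
  calc l * F A = ∑ S : {S : Finset (Fin n) // S.card = p},
        if A ⊆ S.1 then (kernelOf n p b).mulVec v S else 0 := by
        rw [hF, hl, Finset.mul_sum]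
        refine Finset.sum_congr rfl fun S _ => ?_
        simp
    _ = ∑ t : Fin (p + 1), b t * ∑ T : {S : Finset (Fin n) // S.card = p}, v T *
          ∑ S : {S : Finset (Fin n) // S.card = p},
            if A ⊆ S.1 then ((S.1 ∩ T.1).card.choose (t : ℕ) : ℝ) else 0 := by
        have h : ∀ S : {S : Finset (Fin n) // S.card = p},
            (if A ⊆ S.1 then (kernelOf n p b).mulVec v S else 0)
              = ∑ t : Fin (p + 1), ∑ T : {S : Finset (Fin n) // S.card = p}, b t * (v T *
                  if A ⊆ S.1 then ((S.1 ∩ T.1).card.choose (t : ℕ) : ℝ) else 0) := by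
          intro S
          by_cases hS : A ⊆ S.1
          · simp only [hS, if_true, Matrix.mulVec, dotProduct, kernelOf, Finset.sum_mul]
            rw [Finset.sum_comm]
            refine Finset.sum_congr rfl fun t _ => Finset.sum_congr rfl fun T _ => ?_
            ring
          · simp [hS]
        simp only [h, Finset.mul_sum]
        rw [Finset.sum_comm]
        exact Finset.sum_congr rfl fun t _ => Finset.sum_comm
    _ = ∑ t : Fin (p + 1), b t * ∑ R ∈ A.powerset,
          (if R.card ≤ (t : ℕ) then ((n - A.card - t).choose (n - p - R.card) : ℝ) *
            (p - R.card).choose (t - R.card) else 0) * F R := by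
        refine Finset.sum_congr rfl fun t _ => ?_
        congr 1
        have h := fun T : {S : Finset (Fin n) // S.card = p} =>
          sum_subtype_superset_choose_inter n p t hpn (by omega) A T.1 (by omega) T.2
        simp only [h, hF, Finset.mul_sum]
        rw [Finset.sum_comm]
        refine Finset.sum_congr rfl fun R _ => Finset.sum_congr rfl fun T _ => ?_
        by_cases h : R ⊆ T.1 <;> simp [h, mul_comm]
    _ = (deltaMat n p).mulVec b ⟨j, by omega⟩ * F A := by
        rw [Matrix.mulVec, dotProduct, Finset.sum_mul]
        refine Finset.sum_congr rfl fun t _ => ?_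
        rw [Finset.sum_eq_single A]
        · have ht : (t : ℕ) ≤ p := by omega
          have e : (n - j - t).choose (n - p - j) = (n - t - j).choose (p - t) := by
            rw [← Nat.choose_symm_of_eq_add (n := n - t - j) (a := n - p - j) (b := p - t)
              (by omega)]
            congr 1
            omega
          simp only [deltaMat, hAj, e]
          split_ifs <;> ring
        · intro R hR hne
          rw [hmin R (Finset.ssubset_iff_subset_ne.mpr ⟨Finset.mem_powerset.mp hR, hne⟩), mul_zero]
        · simp

lemma kernelOf_eq_zero (n p : ℕ) (hpn : 2 * p ≤ n) (b : Fin (p + 1) → ℝ)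
    (h : kernelOf n p b = 0) : b = 0 := by
  -- Two `p`-sets can meet in any number `k ≤ p` of points because `2 * p ≤ n`.
  have hk : ∀ k ≤ p, ∑ t : Fin (p + 1), b t * (k.choose (t : ℕ) : ℝ) = 0 := by
    intro k hk
    obtain ⟨S, hS⟩ := Finset.exists_subset_card_eq (s := (Finset.univ : Finset (Fin n)))
      (n := p) (by simp; omega)
    obtain ⟨I, hI⟩ := Finset.exists_subset_card_eq (s := S) (n := k) (by omega)
    obtain ⟨J, hJ⟩ := Finset.exists_subset_card_eq (s := Sᶜ) (n := p - k)
      (by rw [Finset.card_compl, Fintype.card_fin]; omega)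
    have hSJ : Disjoint S J := Finset.disjoint_of_subset_right hJ.1 disjoint_compl_right
    have hT : (I ∪ J).card = p := by
      rw [Finset.card_union_of_disjoint (Finset.disjoint_of_subset_left hI.1 hSJ), hI.2, hJ.2]
      omega
    have hST : (S ∩ (I ∪ J)).card = k := by
      rw [Finset.inter_union_distrib_left, Finset.disjoint_iff_inter_eq_empty.mp hSJ,
        Finset.union_empty, Finset.inter_eq_right.mpr hI.1, hI.2]
    have := congrFun (congrFun h ⟨S, hS.2⟩) ⟨I ∪ J, hT⟩
    simpa only [kernelOf, hST, Matrix.zero_apply] using this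
  have hb : ∀ k (hk' : k < p + 1), b ⟨k, hk'⟩ = 0 := by
    intro k
    induction k using Nat.strong_induction_on with
    | _ k ih =>
      intro hk'
      have := hk k (by omega)
      rw [Finset.sum_eq_single ⟨k, hk'⟩] at this
      · simpa using this
      · intro t _ hne
        rcases lt_trichotomy (t : ℕ) k with hlt | heq | hgt
        · rw [ih t hlt t.2, zero_mul]
        · exact absurd (Fin.ext heq) hne
        · rw [Nat.choose_eq_zero_of_lt hgt]
          simp
      · simp
  ext t
  exact hb t t.2

lemma isUnit_det_deltaMat (n p : ℕ) (hpn : 2 * p ≤ n) : IsUnit (deltaMat n p).det := by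
  rw [isUnit_iff_ne_zero, Matrix.det_of_isUpperTriangular]
  · refine Finset.prod_ne_zero_iff.mpr fun i _ => ?_
    have h : 0 < (n - (i : ℕ) - i).choose (p - i) := Nat.choose_pos (by omega)
    simp [deltaMat, h.ne']
  · intro i j hij
    have : ¬ (i : ℕ) ≤ j := by simpa using hij
    simp [deltaMat, this]

lemma deltaMat_mulVec_betaBar (n p : ℕ) (hpn : 2 * p ≤ n) (i : Fin (p + 1)) :
    (deltaMat n p).mulVec (betaBar n p i) = Pi.single i 1 := by
  rw [betaBar, Matrix.mulVec_mulVec, Matrix.mul_nonsing_inv _ (isUnit_det_deltaMat n p hpn),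
    Matrix.one_mulVec]

lemma posSemidef_kernelOf_betaBar (n p : ℕ) (hpn : 2 * p ≤ n) (i : Fin (p + 1)) :
    (kernelOf n p (betaBar n p i)).PosSemidef := by
  have hH := kernelOf_isHermitian n p (betaBar n p i)
  rw [hH.posSemidef_iff_eigenvalues_nonneg]
  intro k
  have hne : ⇑(hH.eigenvectorBasis k) ≠ 0 := by
    intro h
    apply hH.eigenvectorBasis.orthonormal.ne_zero k
    ext x
    exact congrFun h x
  obtain ⟨j, hj⟩ := eigenvalue_kernelOf n p hpn _ _ hne _ (hH.mulVec_eigenvectorBasis k)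
  rw [hj, deltaMat_mulVec_betaBar n p hpn, Pi.single_apply]
  simp only [Pi.zero_apply]
  split_ifs <;> norm_num

lemma kernelOf_diag (n p : ℕ) (b : Fin (p + 1) → ℝ) (S : {S : Finset (Fin n) // S.card = p}) :
    kernelOf n p b S S = ∑ l, etaVec p l * b l := by
  simp only [kernelOf, Finset.inter_self, S.2, etaVec]
  exact Finset.sum_congr rfl fun _ _ => mul_comm _ _

lemma eta_betaBar_pos (n p : ℕ) (hpn : 2 * p ≤ n) (i : Fin (p + 1)) :
    0 < ∑ l, etaVec p l * betaBar n p i l := by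
  have hpsd := posSemidef_kernelOf_betaBar n p hpn i
  obtain ⟨S, hS⟩ := Finset.exists_subset_card_eq (s := (Finset.univ : Finset (Fin n)))
    (n := p) (by simp; omega)
  have h0 := hpsd.diag_nonneg (i := ⟨S, hS.2⟩)
  rw [kernelOf_diag] at h0
  refine lt_of_le_of_ne h0 fun heq => ?_
  have htr : (kernelOf n p (betaBar n p i)).trace = 0 := by
    simp [Matrix.trace, Matrix.diag, kernelOf_diag, ← heq]
  have hb := kernelOf_eq_zero n p hpn _ (hpsd.trace_eq_zero_iff.mp htr)
  have he := congrFun (deltaMat_mulVec_betaBar n p hpn i) i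
  simp [hb] at he

lemma vertexKernel_eq_smul (n p : ℕ) (i : Fin (p + 1)) :
    vertexKernel n p i
      = (∑ l, etaVec p l * betaBar n p i l)⁻¹ • kernelOf n p (betaBar n p i) := by
  ext S T
  simp only [vertexKernel, kernelOf, betaVec, Matrix.smul_apply, smul_eq_mul, Finset.mul_sum]
  refine Finset.sum_congr rfl fun t _ => ?_
  ring

/-- `Δ^p` is invertible, each `⟨η^p, β̄^{(i)}⟩` is positive, and each vertex kernel `K_i`
is positive semidefinite with all diagonal entries at most `1`. -/
theorem statement5 (n p : ℕ) (hp : 1 ≤ p) (hpn : 2 * p ≤ n) :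
    IsUnit (deltaMat n p).det ∧
    (∀ i : Fin (p + 1), 0 < ∑ l, etaVec p l * betaBar n p i l) ∧
    ∀ i : Fin (p + 1),
      (vertexKernel n p i).PosSemidef ∧ ∀ S, vertexKernel n p i S S ≤ 1 := by
  refine ⟨isUnit_det_deltaMat n p hpn, eta_betaBar_pos n p hpn, fun i => ⟨?_, fun S => ?_⟩⟩
  · rw [vertexKernel_eq_smul]
    exact (posSemidef_kernelOf_betaBar n p hpn i).smul (inv_nonneg.mpr (eta_betaBar_pos n p hpn i).le)
  · rw [vertexKernel_eq_smul, Matrix.smul_apply, kernelOf_diag, smul_eq_mul,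
      inv_mul_cancel₀ (eta_betaBar_pos n p hpn i).ne']
end
end

section
/- Let n, p be integers with 1 ≤ p ≤ n/2, and for i ∈ {0,…,p} let β^{(i)} = (Δ^p)^{-1} e_i / ⟨η^p, (Δ^p)^{-1} e_i⟩ ∈ ℝ^{p+1}. Then every β ∈ ℝ^{p+1} satisfying (Δ^p β)_j ≥ 0 for all j and ⟨η^p, β⟩ ≤ 1 can be written as β = ∑_{i=0}^{p} λ_i β^{(i)} with λ_i ≥ 0 for all i and ∑_{i=0}^{p} λ_i ≤ 1. (The polytope of Euclidean kernels on a hypercube layer is the sub-convex hull of p+1 vertices.) -/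
/-!
The denominators `⟨η^p, (Δ^p)⁻¹ e_i⟩` are positive; everything else is linear algebra. Indeed
`Δ^p` is upper triangular with positive diagonal, hence invertible, so
`β = ∑ i, (Δ^p β)_i • (Δ^p)⁻¹ e_i`, and the weights `λ_i = (Δ^p β)_i * ⟨η^p, (Δ^p)⁻¹ e_i⟩` are
nonnegative and sum to `⟨η^p, β⟩ ≤ 1`.

Positivity comes from computing the same trace in two ways: the numbers `(Δ^p β)_j` are eigenvalues
of a kernel on the layer of size `C(n, p)` of the hypercube, with multiplicities
`m_j = C(n, j) - C(n, j - 1)`, and `⟨η^p, β⟩` is its diagonal value. This is the identity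
`∑ j, m_j Δ^p_{j,ℓ} = C(n, p) * C(p, ℓ)`, which gives
`⟨η^p, (Δ^p)⁻¹ e_i⟩ = m_i / C(n, p)`, positive because `2 * i ≤ n`.

The identity is proved here by Pascal's rule. With `q = n - p` and `d = p - ℓ` the left side is
`S(p, q, d) = ∑_{j ≤ min p q} m_j * C(q + d - j, d) * C(p - j, d)`, and Pascal's rule for `m_j` and
for the two other factors yields
`S(p+1, q+1, d+1) = S(p, q+1, d+1) + S(p+1, q, d+1) + S(p, q+1, d)` (`layerSum_succ`);
`C(p + q, p) * C(p, d)` satisfies the same recurrence and boundary values (`layerSum_eq`).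
-/

open scoped Classical

noncomputable section

/-- `C(n, j) - C(n, j - 1)`, with `C(n, -1) = 0`: the dimension of the `j`-th isotypic component of
functions on a layer of the `n`-dimensional hypercube. -/
def multDim (n : ℕ) : ℕ → ℝ
  | 0 => 1
  | j + 1 => (n.choose (j + 1) : ℝ) - n.choose j

/-- `C(q + d - j, d)` for `j ≤ q`, and `0` for `j > q`. The cut-off keeps Pascal's rule valid at
`d = 0`. -/
def upFactor (d q j : ℕ) : ℝ := if j ≤ q then ((q + d - j).choose d : ℝ) else 0

/-- `C(p - j, d)` for `j ≤ p`, and `0` for `j > p`. -/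
def downFactor (d p j : ℕ) : ℝ := if j ≤ p then ((p - j).choose d : ℝ) else 0

/-- The sum `S(p, q, d)`. The terms vanish for `j > min p q`, so the upper bound `p` is harmless. -/
def layerSum (p q d : ℕ) : ℝ :=
  ∑ j ∈ Finset.range (p + 1), multDim (p + q) j * (upFactor d q j * downFactor d p j)

lemma multDim_succ_succ (n j : ℕ) :
    multDim (n + 1) (j + 1) = multDim n (j + 1) + multDim n j := by
  cases j with
  | zero => simp [multDim]
  | succ j =>
    simp only [multDim, Nat.choose_succ_succ n (j + 1), Nat.choose_succ_succ n j, Nat.succ_eq_add_one]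
    push_cast
    ring

lemma sum_multDim (n m : ℕ) : ∑ j ∈ Finset.range (m + 1), multDim n j = n.choose m := by
  induction m with
  | zero => simp [multDim]
  | succ m ih => rw [Finset.sum_range_succ, ih]; simp [multDim]

lemma multDim_pos {n j : ℕ} (h : 2 * j ≤ n) : 0 < multDim n j := by
  cases j with
  | zero => simp [multDim]
  | succ j =>
    simp only [multDim, sub_pos, Nat.cast_lt]
    have h1 := Nat.choose_succ_right_eq n j
    have h2 : 0 < n.choose j := Nat.choose_pos (by omega)
    have h3 : j + 1 < n - j := by omega
    by_contra! h4
    nlinarith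

lemma upFactor_pascal (d q j : ℕ) :
    upFactor (d + 1) (q + 1) j = upFactor (d + 1) q j + upFactor d (q + 1) j := by
  unfold upFactor
  rcases lt_trichotomy j (q + 1) with h | h | h
  · rw [if_pos (by omega), if_pos (by omega), if_pos (by omega),
      show q + 1 + (d + 1) - j = (q + 1 + d - j) + 1 by omega,
      show q + (d + 1) - j = q + 1 + d - j by omega, Nat.choose_succ_succ]
    push_cast
    ring
  · subst h
    simp
  · rw [if_neg (by omega), if_neg (by omega), if_neg (by omega)]
    simp

lemma downFactor_pascal (d p j : ℕ) :
    downFactor (d + 1) (p + 1) j = downFactor (d + 1) p j + downFactor d p j := by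
  unfold downFactor
  rcases lt_trichotomy j (p + 1) with h | h | h
  · rw [if_pos (by omega), if_pos (by omega), if_pos (by omega),
      show p + 1 - j = (p - j) + 1 by omega, Nat.choose_succ_succ]
    push_cast
    ring
  · subst h
    simp
  · rw [if_neg (by omega), if_neg (by omega), if_neg (by omega)]
    simp

lemma upFactor_shift (d q j : ℕ) : upFactor d (q + 1) (j + 1) = upFactor d q j := by
  simp [upFactor, show q + 1 + d - (j + 1) = q + d - j by omega]

lemma downFactor_shift (d p j : ℕ) : downFactor d (p + 1) (j + 1) = downFactor d p j := by
  simp [downFactor]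

/-- One more term may be summed: it vanishes. -/
lemma layerSum_extend (p q d : ℕ) :
    layerSum p q d =
      ∑ j ∈ Finset.range (p + 1 + 1), multDim (p + q) j * (upFactor d q j * downFactor d p j) := by
  rw [Finset.sum_range_succ _ (p + 1)]
  simp [layerSum, downFactor]

lemma layerSum_succ (p q d : ℕ) :
    layerSum (p + 1) (q + 1) (d + 1) =
      layerSum p (q + 1) (d + 1) + layerSum (p + 1) q (d + 1) + layerSum p (q + 1) d := by
  -- Pascal's rule for `multDim`, followed by the shift `j ↦ j + 1` in one of the two sums.
  have key : layerSum (p + 1) (q + 1) (d + 1) =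
      ∑ j ∈ Finset.range (p + 1 + 1), multDim (p + q + 1) j *
        (upFactor (d + 1) (q + 1) j * downFactor (d + 1) (p + 1) j
          + upFactor (d + 1) q j * downFactor (d + 1) p j) := by
    simp only [mul_add, Finset.sum_add_distrib]
    rw [Finset.sum_range_succ (fun j => multDim (p + q + 1) j *
      (upFactor (d + 1) q j * downFactor (d + 1) p j)) (p + 1),
      show downFactor (d + 1) p (p + 1) = 0 by simp [downFactor],
      layerSum, Finset.sum_range_succ', Finset.sum_range_succ' _ (p + 1)]
    simp only [show p + 1 + (q + 1) = p + q + 1 + 1 by ring, multDim_succ_succ, upFactor_shift,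
      downFactor_shift, add_mul, Finset.sum_add_distrib]
    simp only [multDim]
    ring
  rw [key, layerSum_extend p (q + 1) (d + 1), layerSum_extend p (q + 1) d, layerSum,
    ← Finset.sum_add_distrib, ← Finset.sum_add_distrib]
  refine Finset.sum_congr rfl fun j _ => ?_
  rw [show p + (q + 1) = p + q + 1 by ring, show p + 1 + q = p + q + 1 by ring,
    upFactor_pascal, downFactor_pascal]
  ring

lemma layerSum_zero (p q : ℕ) : layerSum p q 0 = (p + q).choose p := by
  have hf : ∀ j, upFactor 0 q j * downFactor 0 p j = if j ≤ q ∧ j ≤ p then 1 else 0 := by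
    intro j
    by_cases h1 : j ≤ q <;> by_cases h2 : j ≤ p <;> simp [upFactor, downFactor, h1, h2]
  have hs : layerSum p q 0 = ∑ j ∈ Finset.range (min p q + 1), multDim (p + q) j := by
    simp only [layerSum, hf, mul_ite, mul_one, mul_zero]
    rw [← Finset.sum_filter]
    refine Finset.sum_congr ?_ fun _ _ => rfl
    ext j
    simp only [Finset.mem_filter, Finset.mem_range]
    omega
  rw [hs, sum_multDim]
  rcases le_total p q with h | h
  · rw [min_eq_left h]
  · rw [min_eq_right h, Nat.choose_symm_add]

lemma layerSum_eq (p q d : ℕ) : layerSum p q d = ((p + q).choose p : ℝ) * p.choose d := by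
  induction hn : p + q generalizing p q d with
  | zero =>
    obtain ⟨rfl, rfl⟩ : p = 0 ∧ q = 0 := by omega
    cases d <;> simp [layerSum, multDim, upFactor, downFactor]
  | succ n ih =>
    rcases d with _ | d
    · rw [layerSum_zero, hn]
      simp
    rcases p with _ | p
    · simp [layerSum, downFactor]
    rcases q with _ | q
    · -- Only `j = 0` contributes.
      rw [layerSum, Finset.sum_range_succ', Finset.sum_eq_zero]
      · obtain rfl : p = n := by omega
        simp [multDim, upFactor, downFactor]
      · intro j _
        simp [upFactor]
    rw [layerSum_succ, ih p (q + 1) (d + 1) (by omega), ih (p + 1) q (d + 1) (by omega),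
      ih p (q + 1) d (by omega), Nat.choose_succ_succ n p, Nat.choose_succ_succ p d]
    push_cast
    simp only [Nat.succ_eq_add_one]
    ring

/-- The trace identity: `η^p` is a combination of the rows of `Δ^p`, with the multiplicities as
coefficients. -/
lemma multDim_vecMul (n p : ℕ) (hpn : 2 * p ≤ n) (l : Fin (p + 1)) :
    ∑ j : Fin (p + 1), multDim n j * deltaMat n p j l = (n.choose p : ℝ) * etaVec p l := by
  obtain ⟨q, rfl⟩ : ∃ q, n = p + q := ⟨n - p, by omega⟩
  have hl : (l : ℕ) ≤ p := by omega
  have h := layerSum_eq p q (p - l)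
  rw [Nat.choose_symm hl] at h
  rw [etaVec, ← h, layerSum, Finset.sum_range]
  refine Finset.sum_congr rfl fun j _ => ?_
  have hj : (j : ℕ) ≤ p := by omega
  congr 1
  unfold deltaMat upFactor downFactor
  rw [if_pos (by omega : (j : ℕ) ≤ q), if_pos hj]
  split_ifs with hjl
  · rw [show p + q - (l : ℕ) - j = q + (p - l) - j by omega,
      ← Nat.choose_symm (show (l : ℕ) - j ≤ p - j by omega),
      show p - (j : ℕ) - (l - j) = p - l by omega]
  · rw [Nat.choose_eq_zero_of_lt (show p - (j : ℕ) < p - l by omega)]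
    simp

/-- The normalizing constants are the relative multiplicities. -/
lemma eta_betaBar (n p : ℕ) (hpn : 2 * p ≤ n) (i : Fin (p + 1)) :
    ∑ l, etaVec p l * betaBar n p i l = multDim n i / n.choose p := by
  have hc : (n.choose p : ℝ) ≠ 0 := by
    have : 0 < n.choose p := Nat.choose_pos (by omega)
    exact_mod_cast this.ne'
  have hΔ : (deltaMat n p).mulVec (betaBar n p i) = Pi.single i 1 := by
    rw [betaBar, Matrix.mulVec_mulVec, Matrix.mul_nonsing_inv _ (isUnit_det_deltaMat n p hpn),
      Matrix.one_mulVec]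
  have hv : Matrix.vecMul (fun j : Fin (p + 1) => multDim n j) (deltaMat n p)
      = (n.choose p : ℝ) • etaVec p := by
    ext l
    exact multDim_vecMul n p hpn l
  have h := Matrix.dotProduct_mulVec (fun j : Fin (p + 1) => multDim n j) (deltaMat n p)
    (betaBar n p i)
  rw [hΔ, hv, dotProduct_single, smul_dotProduct, mul_one, smul_eq_mul] at h
  rw [eq_div_iff hc, h, mul_comm]
  rfl

/-- The polytope of Euclidean kernels on a hypercube layer is the sub-convex hull of the
`p+1` vertices `β^{(0)},…,β^{(p)}`. -/
theorem statement6 (n p : ℕ) (hp : 1 ≤ p) (hpn : 2 * p ≤ n)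
    (β : Fin (p + 1) → ℝ)
    (h1 : ∀ j, 0 ≤ (deltaMat n p).mulVec β j)
    (h2 : ∑ l, etaVec p l * β l ≤ 1) :
    ∃ lam : Fin (p + 1) → ℝ,
      (∀ i, 0 ≤ lam i) ∧ (∑ i, lam i ≤ 1) ∧
      ∀ t, β t = ∑ i, lam i * betaVec n p i t := by
  have hpos : ∀ i, 0 < ∑ l, etaVec p l * betaBar n p i l := by
    intro i
    rw [eta_betaBar n p hpn]
    have hc : 0 < n.choose p := Nat.choose_pos (by omega)
    exact div_pos (multDim_pos (by omega)) (by exact_mod_cast hc)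
  have hβ : ∀ t, β t = ∑ i, (deltaMat n p).mulVec β i * betaBar n p i t := by
    intro t
    have h : (deltaMat n p)⁻¹.mulVec ((deltaMat n p).mulVec β) = β := by
      rw [Matrix.mulVec_mulVec, Matrix.nonsing_inv_mul _ (isUnit_det_deltaMat n p hpn),
        Matrix.one_mulVec]
    conv_lhs => rw [← h]
    rw [Matrix.mulVec, dotProduct]
    refine Finset.sum_congr rfl fun i _ => ?_
    rw [betaBar, Matrix.mulVec_single_one, Matrix.col_apply, mul_comm]
  refine ⟨fun i => (deltaMat n p).mulVec β i * ∑ l, etaVec p l * betaBar n p i l,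
    fun i => mul_nonneg (h1 i) (hpos i).le, ?_, fun t => ?_⟩
  · refine le_of_eq_of_le ?_ h2
    simp only [Finset.mul_sum]
    rw [Finset.sum_comm]
    refine Finset.sum_congr rfl fun l _ => ?_
    rw [hβ l, Finset.mul_sum]
    exact Finset.sum_congr rfl fun i _ => by ring
  · rw [hβ t]
    refine Finset.sum_congr rfl fun i _ => ?_
    have := (hpos i).ne'
    unfold betaVec
    field_simp
end
end

section
/- Let n, p be integers with 0 ≤ p ≤ n/2, and let K be a real matrix indexed by the p-element subsets of {1,…,n} such that K(S,T) = f(|S ∩ T|) for some f : ℕ → ℝ. Then K is symmetric and has at most p+1 distinct eigenvalues: there exists a set E ⊆ ℝ with |E| ≤ p+1 such that every real eigenvalue of K belongs to E. -/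
/-! The matrices `(S, T) ↦ g |S ∩ T|` form a subalgebra of the full matrix algebra: the entry
`(M * N) S T = ∑ U, g |S ∩ U| * h |U ∩ T|` depends only on `|S ∩ T|`, because any two pairs
`(S, T)`, `(S', T')` of `p`-sets with `|S ∩ T| = |S' ∩ T'|` are related by a permutation of the
ground set (`exists_perm_image_eq`), and reindexing the sum over `U` by that permutation does not
change it. Since `|S ∩ T| ≤ p`, this subalgebra has dimension at most `p + 1`. Hence the
minimal polynomial of `K` in this subalgebra has degree at most `p + 1`, and every eigenvalue of
`K` is one of its roots. -/

open scoped Classical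

noncomputable section

/-- Pairs of `p`-sets with intersections of equal size lie in the same orbit of the symmetric
group: the four cells of the Venn diagram have matching cardinalities. -/
lemma exists_perm_image_eq {n p : ℕ} (S T S' T' : Finset (Fin n)) (hS : S.card = p)
    (hT : T.card = p) (hS' : S'.card = p) (hT' : T'.card = p)
    (h : (S ∩ T).card = (S' ∩ T').card) :
    ∃ σ : Equiv.Perm (Fin n), (∀ x, σ x ∈ S' ↔ x ∈ S) ∧ (∀ x, σ x ∈ T' ↔ x ∈ T) := by
  let c : Finset (Fin n) → Finset (Fin n) → Fin n → Prop × Prop := fun A B x => (x ∈ A, x ∈ B)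
  have key : ∀ y : Prop × Prop, Nonempty ({x // c S T x = y} ≃ {x // c S' T' x = y}) := by
    rintro ⟨a, b⟩
    refine ⟨Fintype.equivOfCardEq ?_⟩
    rw [Fintype.card_subtype, Fintype.card_subtype]
    have h1 := Finset.card_sdiff_add_card_inter S T
    have h2 := Finset.card_sdiff_add_card_inter T S
    have h3 := Finset.card_sdiff_add_card_inter S' T'
    have h4 := Finset.card_sdiff_add_card_inter T' S'
    have h5 := Finset.card_compl_add_card (S ∪ T)
    have h6 := Finset.card_compl_add_card (S' ∪ T')
    have h7 := Finset.card_union_add_card_inter S T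
    have h8 := Finset.card_union_add_card_inter S' T'
    rw [Finset.inter_comm] at h2 h4
    have e : ∀ A B : Finset (Fin n), (Finset.univ.filter fun x => c A B x = (a, b)) =
        if a then (if b then A ∩ B else A \ B) else (if b then B \ A else (A ∪ B)ᶜ) := by
      intro A B
      ext x
      by_cases ha : a <;> by_cases hb : b <;> simp [c, ha, hb] <;> tauto
    rw [e, e]
    split_ifs <;> omega
  let e := fun y => (key y).some
  refine ⟨Equiv.ofFiberEquiv e, fun x => ?_, fun x => ?_⟩
  · have := Equiv.ofFiberEquiv_map e x
    exact iff_of_eq (congrArg Prod.fst this)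
  · have := Equiv.ofFiberEquiv_map e x
    exact iff_of_eq (congrArg Prod.snd this)

/-- The permutation action on `p`-subsets. -/
def permSubsets {n : ℕ} (p : ℕ) (σ : Equiv.Perm (Fin n)) :
    {S : Finset (Fin n) // S.card = p} ≃ {S : Finset (Fin n) // S.card = p} :=
  (Equiv.finsetCongr σ).subtypeEquiv fun S => by simp

lemma card_inter_permSubsets {n p : ℕ} (σ : Equiv.Perm (Fin n)) {A A' : Finset (Fin n)}
    (h : ∀ x, σ x ∈ A' ↔ x ∈ A) (U : {S : Finset (Fin n) // S.card = p}) :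
    (A' ∩ (permSubsets p σ U).1).card = (A ∩ U.1).card := by
  have : A' ∩ (permSubsets p σ U).1 = (A ∩ U.1).map σ.toEmbedding := by
    ext y
    obtain ⟨x, rfl⟩ := σ.surjective y
    simp [permSubsets, h]
  rw [this, Finset.card_map]

/-- The algebra of set-symmetric matrices (the Bose–Mesner algebra of the Johnson scheme). -/
def setSymmetric (n p : ℕ) : Subalgebra ℝ
    (Matrix {S : Finset (Fin n) // S.card = p} {S : Finset (Fin n) // S.card = p} ℝ) where
  carrier := {M | ∃ g : ℕ → ℝ, ∀ S T, M S T = g (S.1 ∩ T.1).card}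
  mul_mem' := by
    rintro M N ⟨g, hg⟩ ⟨h, hh⟩
    have inv : ∀ S T S' T' : {S : Finset (Fin n) // S.card = p},
        (S.1 ∩ T.1).card = (S'.1 ∩ T'.1).card → (M * N) S T = (M * N) S' T' := by
      intro S T S' T' hc
      obtain ⟨σ, h1, h2⟩ := exists_perm_image_eq S.1 T.1 S'.1 T'.1 S.2 T.2 S'.2 T'.2 hc
      rw [Matrix.mul_apply, Matrix.mul_apply]
      refine Fintype.sum_equiv (permSubsets p σ) _ _ fun U => ?_
      rw [hg, hg, hh, hh, card_inter_permSubsets σ h1, Finset.inter_comm _ T'.1,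
        card_inter_permSubsets σ h2, Finset.inter_comm T.1]
    -- `g k` is the common value of the entries at pairs meeting in `k` points, if there are any.
    refine ⟨fun k => if hk : ∃ q : {S : Finset (Fin n) // S.card = p} ×
        {S : Finset (Fin n) // S.card = p}, (q.1.1 ∩ q.2.1).card = k
      then (M * N) hk.choose.1 hk.choose.2 else 0, fun S T => ?_⟩
    have hk : ∃ q : {S : Finset (Fin n) // S.card = p} ×
        {S : Finset (Fin n) // S.card = p}, (q.1.1 ∩ q.2.1).card = (S.1 ∩ T.1).card :=
      ⟨(S, T), rfl⟩
    simp only [dif_pos hk]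
    exact inv _ _ _ _ hk.choose_spec.symm
  add_mem' := by
    rintro M N ⟨g, hg⟩ ⟨h, hh⟩
    exact ⟨g + h, fun S T => by simp [hg, hh]⟩
  algebraMap_mem' := by
    intro r
    refine ⟨fun k => if k = p then r else 0, fun S T => ?_⟩
    have : (S.1 ∩ T.1).card = p ↔ S = T := by
      constructor
      · intro h
        have h1 := Finset.eq_of_subset_of_card_le (Finset.inter_subset_left (s₁ := S.1) (s₂ := T.1))
          (by rw [h, S.2])
        have h2 := Finset.eq_of_subset_of_card_le
          (Finset.inter_subset_right (s₁ := S.1) (s₂ := T.1)) (by rw [h, T.2])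
        exact Subtype.ext (h1.symm.trans h2)
      · rintro rfl
        rw [Finset.inter_self, S.2]
    simp only [this, Matrix.algebraMap_matrix_apply, Algebra.algebraMap_self, RingHom.id_apply]

lemma finrank_setSymmetric_le (n p : ℕ) :
    Module.finrank ℝ (setSymmetric n p) ≤ p + 1 := by
  let L : (Fin (p + 1) → ℝ) →ₗ[ℝ]
      Matrix {S : Finset (Fin n) // S.card = p} {S : Finset (Fin n) // S.card = p} ℝ :=
    { toFun := fun g => Matrix.of fun S T => g (Fin.ofNat (p + 1) (S.1 ∩ T.1).card)
      map_add' := fun _ _ => rfl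
      map_smul' := fun _ _ => rfl }
  have hle : Subalgebra.toSubmodule (setSymmetric n p) ≤ LinearMap.range L := by
    rintro M ⟨g, hg⟩
    refine ⟨fun i => g i, ?_⟩
    ext S T
    have : (S.1 ∩ T.1).card < p + 1 :=
      Nat.lt_succ_of_le ((Finset.card_le_card Finset.inter_subset_left).trans S.2.le)
    simp [L, hg, Nat.mod_eq_of_lt this]
  have h1 := Submodule.finrank_mono hle
  have h2 := LinearMap.finrank_range_le L
  rw [Module.finrank_fin_fun] at h2
  exact h1.trans h2

/-- A set-symmetric matrix indexed by `p`-element subsets of `{1,…,n}` is symmetric and has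
at most `p+1` distinct (real) eigenvalues. -/
theorem statement10 (n p : ℕ) (hpn : 2 * p ≤ n) (f : ℕ → ℝ)
    (K : Matrix {S : Finset (Fin n) // S.card = p} {S : Finset (Fin n) // S.card = p} ℝ)
    (hK : ∀ S T, K S T = f (S.1 ∩ T.1).card) :
    K.IsSymm ∧
    ∃ E : Finset ℝ, E.card ≤ p + 1 ∧
      ∀ (μ : ℝ) (v : {S : Finset (Fin n) // S.card = p} → ℝ),
        v ≠ 0 → K.mulVec v = μ • v → μ ∈ E := by
  refine ⟨Matrix.IsSymm.ext fun S T => by rw [hK, hK, Finset.inter_comm], ?_⟩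
  let k : setSymmetric n p := ⟨K, f, hK⟩
  obtain ⟨q, hq0, hqdeg, hqk⟩ : ∃ q : Polynomial ℝ, q ≠ 0 ∧ q.natDegree ≤ p + 1 ∧
      Polynomial.aeval k q = 0 := by
    have hfin : Module.Finite ℝ (setSymmetric n p) :=
      FiniteDimensional.finiteDimensional_submodule (Subalgebra.toSubmodule (setSymmetric n p))
    exact ⟨minpoly ℝ k, minpoly.ne_zero_of_finite ℝ k,
      (minpoly.natDegree_le (A := ℝ) k).trans (finrank_setSymmetric_le n p), minpoly.aeval ℝ k⟩
  refine ⟨q.roots.toFinset, (Multiset.toFinset_card_le _).trans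
    ((Polynomial.card_roots' q).trans hqdeg), fun μ v hv hKv => ?_⟩
  have hqK : Polynomial.aeval K q = 0 := by
    have := Polynomial.aeval_algHom_apply (setSymmetric n p).val k q
    rw [hqk, map_zero] at this
    exact this
  have hev : Module.End.HasEigenvector (Matrix.toLinAlgEquiv' K) μ v :=
    ⟨Module.End.mem_eigenspace_iff.2 (by rw [Matrix.toLinAlgEquiv'_apply, hKv]), hv⟩
  have h := Module.End.aeval_apply_of_hasEigenvector (p := q) hev
  rw [Polynomial.aeval_algEquiv, AlgHom.comp_apply, hqK, map_zero, LinearMap.zero_apply] at h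
  rw [Multiset.mem_toFinset, Polynomial.mem_roots hq0]
  exact (smul_eq_zero.1 h.symm).resolve_right hv
end
end
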